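/- Let T > 0 and L, M ≥ 0. Let b¹ : [0,T] × ℝ → ℝ be such that b¹ and its partial derivative ∂_s b¹ in the first variable exist, are continuous, and satisfy |b¹(s,c) − b¹(s,c')| ≤ L|c − c'| and |∂_s b¹(s,c) − ∂_s b¹(s,c')| ≤ L|c − c'| for all s ∈ [0,T] and c, c' ∈ ℝ. Let b² : [0,T] → ℝ be continuously differentiable with |b²(s)| ≤ M and |(b²)'(s)| ≤ M for all s ∈ [0,T]. Then there exists a constant C ≥ 0 such that for all continuously differentiable x, y : ℝ → ℝ and every t ∈ [0,T], setting g_x(s) := b¹(s, x(t)) + b²(s) x(s) and g_y(s) := b¹(s, y(t)) + b²(s) y(s), one has ∫_0^T (g_x(s) − g_y(s))² ds + ∫_0^T (g_x'(s) − g_y'(s))² ds ≤ C ( ∫_0^T (x(s) − y(s))² ds + ∫_0^T (x'(s) − y'(s))² ds ). -/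

import Mathlib

open MeasureTheory Set Real

/-!
For `w = x - y` the fundamental theorem of calculus bounds the oscillation of `‖w‖²` on `[a, b]` by
`∫ 2‖w‖‖w'‖ ≤ ‖w‖²_{W^{1,2}}`; averaging over the base point gives the Sobolev embedding
`(b - a)‖w t‖² ≤ (1 + (b - a))‖w‖²_{W^{1,2}}`. The difference of the two lifted drifts is
`b₁(·, x t) - b₁(·, y t) + b₂ w`. Its first part and the derivative of that part are bounded
pointwise by `L‖w t‖`, which the embedding controls, and the product rule controls `b₂ w`.
-/

section

variable {E F : Type*} [NormedAddCommGroup E] [NormedAddCommGroup F] {a b : ℝ}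

theorem norm_add_sq_le (v w : E) : ‖v + w‖ ^ 2 ≤ 2 * (‖v‖ ^ 2 + ‖w‖ ^ 2) :=
  (pow_le_pow_left₀ (norm_nonneg _) (norm_add_le v w) 2).trans add_sq_le

theorem norm_add₃_sq_le (v w z : E) :
    ‖v + w + z‖ ^ 2 ≤ 3 * (‖v‖ ^ 2 + ‖w‖ ^ 2 + ‖z‖ ^ 2) := by
  have htriangle := pow_le_pow_left₀ (norm_nonneg _) (norm_add₃_le (a := v) (b := w) (c := z)) 2
  linarith [two_mul_le_add_sq ‖v‖ ‖w‖, two_mul_le_add_sq ‖v‖ ‖z‖, two_mul_le_add_sq ‖w‖ ‖z‖]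

/-- The squared norm of `u` in the Sobolev space `W^{1,2}([a, b])`. The derivative `u'` is a
separate argument, so that one-sided derivatives at the endpoints need no special treatment. -/
noncomputable def sobolevNormSq (a b : ℝ) (u u' : ℝ → E) : ℝ :=
  (∫ s in a..b, ‖u s‖ ^ 2) + ∫ s in a..b, ‖u' s‖ ^ 2

theorem intervalIntegrable_norm_sq {u : ℝ → E} (hab : a ≤ b)
    (hu : ContinuousOn u (Icc a b)) : IntervalIntegrable (fun s => ‖u s‖ ^ 2) volume a b :=
  (hu.norm.pow 2).intervalIntegrable_of_Icc hab

theorem sobolevNormSq_eq_integral_add {u u' : ℝ → E} (hab : a ≤ b)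
    (hu : ContinuousOn u (Icc a b)) (hu' : ContinuousOn u' (Icc a b)) :
    sobolevNormSq a b u u' = ∫ s in a..b, (‖u s‖ ^ 2 + ‖u' s‖ ^ 2) :=
  (intervalIntegral.integral_add (intervalIntegrable_norm_sq hab hu)
    (intervalIntegrable_norm_sq hab hu')).symm

variable [NormedSpace ℝ E] [NormedSpace ℝ F]

theorem norm_sub_le_integral_of_norm_hasDerivWithinAt_le {f f' : ℝ → E} {B : ℝ → ℝ}
    (hf : ∀ r ∈ Icc a b, HasDerivWithinAt f (f' r) (Icc a b) r)
    (hB : ∀ r ∈ Icc a b, ‖f' r‖ ≤ B r) (hBi : IntervalIntegrable B volume a b)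
    {s t : ℝ} (hs : s ∈ Icc a b) (ht : t ∈ Icc a b) :
    ‖f t - f s‖ ≤ ∫ r in a..b, B r := by
  wlog hst : s ≤ t generalizing s t
  · rw [norm_sub_rev]
    exact this ht hs (le_of_not_ge hst)
  have hderiv : ∀ r ∈ Ioo s t, HasDerivAt f (f' r) r := fun r hr =>
    (hf r ⟨hs.1.trans hr.1.le, hr.2.le.trans ht.2⟩).hasDerivAt
      (Icc_mem_nhds (hs.1.trans_lt hr.1) (hr.2.trans_le ht.2))
  have hsub : Icc s t ⊆ Icc a b := Icc_subset_Icc hs.1 ht.2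
  calc ‖f t - f s‖ ≤ ∫ r in s..t, B r := by
        refine norm_sub_le_integral_of_norm_deriv_le_of_le hst
          ((HasDerivWithinAt.continuousOn hf).mono hsub)
          (fun r hr => (hderiv r hr).differentiableAt.differentiableWithinAt)
          (ae_of_all _ fun r hr => ?_) (hBi.mono_set ?_)
        · rw [(hderiv r hr).deriv]
          exact hB r (hsub (Ioo_subset_Icc_self hr))
        · rwa [uIcc_of_le hst, uIcc_of_le (hs.1.trans hs.2)]
    _ ≤ ∫ r in a..b, B r := by
        refine intervalIntegral.integral_mono_interval hs.1 hst ht.2 ?_ hBi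
        filter_upwards [ae_restrict_mem measurableSet_Ioc] with r hr
        exact (norm_nonneg _).trans (hB r (Ioc_subset_Icc_self hr))

theorem norm_sq_sub_norm_sq_le_sobolevNormSq {u u' : ℝ → E}
    (hu : ∀ r ∈ Icc a b, HasDerivWithinAt u (u' r) (Icc a b) r)
    (hu' : ContinuousOn u' (Icc a b)) {s t : ℝ} (hs : s ∈ Icc a b) (ht : t ∈ Icc a b) :
    ‖u t‖ ^ 2 - ‖u s‖ ^ 2 ≤ sobolevNormSq a b u u' := by
  have hab : a ≤ b := hs.1.trans hs.2
  have huc : ContinuousOn u (Icc a b) := HasDerivWithinAt.continuousOn hu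
  -- `‖u‖²` need not be differentiable, but `φ(u)²` is, for a functional `φ` norming `u t`.
  obtain ⟨φ, hφ, hφt⟩ := exists_dual_vector'' ℝ (u t)
  have hφle (v : E) : |φ v| ≤ ‖v‖ := φ.le_of_opNorm_le_of_le hφ le_rfl |>.trans_eq (one_mul _)
  have hderiv : ∀ r ∈ Icc a b,
      HasDerivWithinAt (fun r => φ (u r) ^ 2) (2 * φ (u r) * φ (u' r)) (Icc a b) r := fun r hr => by
    simpa using (φ.hasFDerivAt.comp_hasDerivWithinAt r (hu r hr)).fun_pow 2
  have hbound : ∀ r ∈ Icc a b, ‖2 * φ (u r) * φ (u' r)‖ ≤ ‖u r‖ ^ 2 + ‖u' r‖ ^ 2 := fun r _ =>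
    calc ‖2 * φ (u r) * φ (u' r)‖ = 2 * |φ (u r)| * |φ (u' r)| := by simp
      _ ≤ 2 * ‖u r‖ * ‖u' r‖ := by gcongr <;> exact hφle _
      _ ≤ ‖u r‖ ^ 2 + ‖u' r‖ ^ 2 := two_mul_le_add_sq _ _
  calc ‖u t‖ ^ 2 - ‖u s‖ ^ 2 ≤ φ (u t) ^ 2 - φ (u s) ^ 2 := by
        rw [hφt]
        exact sub_le_sub_left (sq_le_sq.2 ((hφle _).trans_eq (abs_norm _).symm)) _
    _ ≤ ‖φ (u t) ^ 2 - φ (u s) ^ 2‖ := le_abs_self _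
    _ ≤ ∫ r in a..b, (‖u r‖ ^ 2 + ‖u' r‖ ^ 2) :=
        norm_sub_le_integral_of_norm_hasDerivWithinAt_le hderiv hbound
          ((intervalIntegrable_norm_sq hab huc).add (intervalIntegrable_norm_sq hab hu')) hs ht
    _ = sobolevNormSq a b u u' := (sobolevNormSq_eq_integral_add hab huc hu').symm

theorem mul_norm_sq_le_mul_sobolevNormSq {u u' : ℝ → E}
    (hu : ∀ r ∈ Icc a b, HasDerivWithinAt u (u' r) (Icc a b) r)
    (hu' : ContinuousOn u' (Icc a b)) {t : ℝ} (ht : t ∈ Icc a b) :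
    (b - a) * ‖u t‖ ^ 2 ≤ (1 + (b - a)) * sobolevNormSq a b u u' := by
  have hab : a ≤ b := ht.1.trans ht.2
  have haverage : (b - a) * (‖u t‖ ^ 2 - sobolevNormSq a b u u') ≤ ∫ s in a..b, ‖u s‖ ^ 2 := by
    rw [← smul_eq_mul, ← intervalIntegral.integral_const]
    exact intervalIntegral.integral_mono_on hab intervalIntegrable_const
      (intervalIntegrable_norm_sq hab (HasDerivWithinAt.continuousOn hu)) fun s hs =>
        sub_le_comm.1 (norm_sq_sub_norm_sq_le_sobolevNormSq hu hu' hs ht)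
  have hle : ∫ s in a..b, ‖u s‖ ^ 2 ≤ sobolevNormSq a b u u' :=
    le_add_of_nonneg_right (intervalIntegral.integral_nonneg hab fun _ _ => sq_nonneg _)
  linarith

theorem norm_clm_apply_sq_le {A : E →L[ℝ] F} {M : ℝ} (hA : ‖A‖ ≤ M) (v : E) :
    ‖A v‖ ^ 2 ≤ M ^ 2 * ‖v‖ ^ 2 := by
  rw [← mul_pow]
  exact pow_le_pow_left₀ (norm_nonneg _) (A.le_of_opNorm_le hA v) 2

theorem sobolevNormSq_add_clm_apply_le {f f' : ℝ → F} {A A' : ℝ → E →L[ℝ] F} {u u' : ℝ → E}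
    {K M : ℝ} (hab : a ≤ b)
    (hf : ContinuousOn f (Icc a b)) (hf' : ContinuousOn f' (Icc a b))
    (hA : ContinuousOn A (Icc a b)) (hA' : ContinuousOn A' (Icc a b))
    (hu : ContinuousOn u (Icc a b)) (hu' : ContinuousOn u' (Icc a b))
    (hfK : ∀ s ∈ Icc a b, ‖f s‖ ≤ K) (hfK' : ∀ s ∈ Icc a b, ‖f' s‖ ≤ K)
    (hAM : ∀ s ∈ Icc a b, ‖A s‖ ≤ M) (hAM' : ∀ s ∈ Icc a b, ‖A' s‖ ≤ M) :
    sobolevNormSq a b (fun s => f s + A s (u s)) (fun s => f' s + A' s (u s) + A s (u' s)) ≤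
      5 * ((b - a) * K ^ 2 + M ^ 2 * sobolevNormSq a b u u') := by
  have hw : ContinuousOn (fun s => f s + A s (u s)) (Icc a b) := hf.add (hA.clm_apply hu)
  have hw' : ContinuousOn (fun s => f' s + A' s (u s) + A s (u' s)) (Icc a b) :=
    (hf'.add (hA'.clm_apply hu)).add (hA.clm_apply hu')
  have hui := (intervalIntegrable_norm_sq hab hu).add (intervalIntegrable_norm_sq hab hu')
  have hpointwise : ∀ s ∈ Icc a b,
      ‖f s + A s (u s)‖ ^ 2 + ‖f' s + A' s (u s) + A s (u' s)‖ ^ 2 ≤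
        5 * (K ^ 2 + M ^ 2 * (‖u s‖ ^ 2 + ‖u' s‖ ^ 2)) := fun s hs => by
    have hfK2 := pow_le_pow_left₀ (norm_nonneg _) (hfK s hs) 2
    have hfK2' := pow_le_pow_left₀ (norm_nonneg _) (hfK' s hs) 2
    have hAu := norm_clm_apply_sq_le (hAM s hs) (u s)
    have hAu' := norm_clm_apply_sq_le (hAM s hs) (u' s)
    have hA'u := norm_clm_apply_sq_le (hAM' s hs) (u s)
    have hMu' : 0 ≤ M ^ 2 * ‖u' s‖ ^ 2 := by positivity
    linarith [norm_add_sq_le (f s) (A s (u s)), norm_add₃_sq_le (f' s) (A' s (u s)) (A s (u' s))]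
  rw [sobolevNormSq_eq_integral_add hab hw hw', sobolevNormSq_eq_integral_add hab hu hu']
  calc _ ≤ ∫ s in a..b, 5 * (K ^ 2 + M ^ 2 * (‖u s‖ ^ 2 + ‖u' s‖ ^ 2)) :=
        intervalIntegral.integral_mono_on hab
          ((intervalIntegrable_norm_sq hab hw).add (intervalIntegrable_norm_sq hab hw'))
          ((intervalIntegrable_const.add (hui.const_mul _)).const_mul _) hpointwise
    _ = _ := by
        rw [intervalIntegral.integral_const_mul,
          intervalIntegral.integral_add intervalIntegrable_const (hui.const_mul _),
          intervalIntegral.integral_const_mul, intervalIntegral.integral_const, smul_eq_mul]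

theorem stmt_11_general {L M : ℝ} {b₁ db₁ : ℝ → E → F} {b₂ db₂ : ℝ → E →L[ℝ] F}
    (hb₁ : ∀ c, ∀ s ∈ Icc a b, HasDerivWithinAt (fun r => b₁ r c) (db₁ s c) (Icc a b) s)
    (hdb₁ : ∀ c, ContinuousOn (fun s => db₁ s c) (Icc a b))
    (hb₁lip : ∀ s ∈ Icc a b, ∀ c c', ‖b₁ s c - b₁ s c'‖ ≤ L * ‖c - c'‖)
    (hdb₁lip : ∀ s ∈ Icc a b, ∀ c c', ‖db₁ s c - db₁ s c'‖ ≤ L * ‖c - c'‖)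
    (hb₂ : ∀ s ∈ Icc a b, HasDerivWithinAt b₂ (db₂ s) (Icc a b) s)
    (hdb₂ : ContinuousOn db₂ (Icc a b))
    (hb₂bd : ∀ s ∈ Icc a b, ‖b₂ s‖ ≤ M) (hdb₂bd : ∀ s ∈ Icc a b, ‖db₂ s‖ ≤ M)
    {x dx y dy : ℝ → E}
    (hx : ∀ s ∈ Icc a b, HasDerivWithinAt x (dx s) (Icc a b) s) (hdx : ContinuousOn dx (Icc a b))
    (hy : ∀ s ∈ Icc a b, HasDerivWithinAt y (dy s) (Icc a b) s) (hdy : ContinuousOn dy (Icc a b))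
    {t : ℝ} (ht : t ∈ Icc a b) :
    sobolevNormSq a b
        (fun s => (b₁ s (x t) + b₂ s (x s)) - (b₁ s (y t) + b₂ s (y s)))
        (fun s => (db₁ s (x t) + db₂ s (x s) + b₂ s (dx s))
          - (db₁ s (y t) + db₂ s (y s) + b₂ s (dy s))) ≤
      5 * (L ^ 2 * (1 + (b - a)) + M ^ 2) *
        sobolevNormSq a b (fun s => x s - y s) (fun s => dx s - dy s) := by
  have hb₁c (c : E) := HasDerivWithinAt.continuousOn (hb₁ c)
  have hderiv : ∀ s ∈ Icc a b,
      HasDerivWithinAt (fun s => x s - y s) (dx s - dy s) (Icc a b) s :=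
    fun s hs => (hx s hs).sub (hy s hs)
  have hsobolev := mul_norm_sq_le_mul_sobolevNormSq hderiv (hdx.sub hdy) ht
  have hdrift := sobolevNormSq_add_clm_apply_le (ht.1.trans ht.2)
    ((hb₁c (x t)).sub (hb₁c (y t))) ((hdb₁ (x t)).sub (hdb₁ (y t)))
    (HasDerivWithinAt.continuousOn hb₂) hdb₂
    (HasDerivWithinAt.continuousOn hderiv) (hdx.sub hdy)
    (fun s hs => hb₁lip s hs _ _) (fun s hs => hdb₁lip s hs _ _) hb₂bd hdb₂bd
  set N := sobolevNormSq a b (fun s => x s - y s) (fun s => dx s - dy s)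
  calc _ = _ := by
        congr 1 <;> funext s <;> simp only [Pi.sub_apply, map_sub] <;> abel
    _ ≤ 5 * ((b - a) * (L * ‖x t - y t‖) ^ 2 + M ^ 2 * N) := hdrift
    _ = 5 * (L ^ 2 * ((b - a) * ‖x t - y t‖ ^ 2) + M ^ 2 * N) := by ring
    _ ≤ 5 * (L ^ 2 * ((1 + (b - a)) * N) + M ^ 2 * N) := by gcongr
    _ = 5 * (L ^ 2 * (1 + (b - a)) + M ^ 2) * N := by ring

end

theorem stmt_11 (T L M : ℝ) (hT : 0 < T) (hL : 0 ≤ L) (hM : 0 ≤ M)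
    (b₁ db₁ : ℝ → ℝ → ℝ)
    (hb₁deriv : ∀ c : ℝ, ∀ s ∈ Set.Icc (0 : ℝ) T,
      HasDerivWithinAt (fun r => b₁ r c) (db₁ s c) (Set.Icc 0 T) s)
    (hb₁cont : ContinuousOn (fun p : ℝ × ℝ => b₁ p.1 p.2) (Set.Icc 0 T ×ˢ Set.univ))
    (hdb₁cont : ContinuousOn (fun p : ℝ × ℝ => db₁ p.1 p.2) (Set.Icc 0 T ×ˢ Set.univ))
    (hb₁lip : ∀ s ∈ Set.Icc (0 : ℝ) T, ∀ c c' : ℝ, |b₁ s c - b₁ s c'| ≤ L * |c - c'|)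
    (hdb₁lip : ∀ s ∈ Set.Icc (0 : ℝ) T, ∀ c c' : ℝ, |db₁ s c - db₁ s c'| ≤ L * |c - c'|)
    (b₂ : ℝ → ℝ) (hb₂ : ContDiff ℝ 1 b₂)
    (hb₂bd : ∀ s ∈ Set.Icc (0 : ℝ) T, |b₂ s| ≤ M)
    (hdb₂bd : ∀ s ∈ Set.Icc (0 : ℝ) T, |deriv b₂ s| ≤ M) :
    ∃ C : ℝ, 0 ≤ C ∧ ∀ x y : ℝ → ℝ, ContDiff ℝ 1 x → ContDiff ℝ 1 y →
      ∀ t ∈ Set.Icc (0 : ℝ) T,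
      (∫ s in (0:ℝ)..T,
          ((b₁ s (x t) + b₂ s * x s) - (b₁ s (y t) + b₂ s * y s)) ^ 2) +
        (∫ s in (0:ℝ)..T,
          ((db₁ s (x t) + deriv b₂ s * x s + b₂ s * deriv x s)
            - (db₁ s (y t) + deriv b₂ s * y s + b₂ s * deriv y s)) ^ 2) ≤
      C * ((∫ s in (0:ℝ)..T, (x s - y s) ^ 2) +
        ∫ s in (0:ℝ)..T, (deriv x s - deriv y s) ^ 2) := by
  have hderiv {f : ℝ → ℝ} (hf : ContDiff ℝ 1 f) :
      ∀ s ∈ Icc 0 T, HasDerivWithinAt f (deriv f s) (Icc 0 T) s :=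
    fun s _ => (hf.differentiable one_ne_zero s).hasDerivAt.hasDerivWithinAt
  have hcont {f : ℝ → ℝ} (hf : ContDiff ℝ 1 f) : ContinuousOn (deriv f) (Icc 0 T) :=
    (hf.continuous_deriv le_rfl).continuousOn
  let mulCLM := ContinuousLinearMap.mul ℝ ℝ
  refine ⟨5 * (L ^ 2 * (1 + T) + M ^ 2), by positivity, fun x y hx hy t ht => ?_⟩
  simpa [sobolevNormSq, mulCLM] using stmt_11_general
    (b₂ := fun s => mulCLM (b₂ s)) (db₂ := fun s => mulCLM (deriv b₂ s)) hb₁deriv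
    (fun c => hdb₁cont.uncurry_right c (mem_univ c)) hb₁lip hdb₁lip
    (fun s hs => mulCLM.hasFDerivAt.comp_hasDerivWithinAt s (hderiv hb₂ s hs))
    (mulCLM.continuous.comp_continuousOn (hcont hb₂))
    (by simpa [mulCLM] using hb₂bd) (by simpa [mulCLM] using hdb₂bd)
    (hderiv hx) (hcont hx) (hderiv hy) (hcont hy) ht
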